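/- Let E be a directed graph and K an absolute (locally finite) field. If the Leavitt path algebra L_K(E) is left artinian, then the unit group L_K(E)^× is a locally finite group, i.e., every finitely generated subgroup of L_K(E)^× is finite. -/

import Mathlib

/-!
An artinian Leavitt path algebra `L` over `K` is finite-dimensional, and a finitely generated group
of units of a finite-dimensional algebra over an absolute field has all its coordinates in a finite
subfield (`LPA.finite_closure_of_finiteDimensional`).

For the finite-dimensionality, note that the vertices, and likewise the elements `e e^*`, are
orthogonal idempotents, so only finitely many of them are nonzero
(`LPA.finite_ne_zero_of_orthogonal`); hence only finitely many edges and ghost edges are nonzero in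
`L`. Furthermore `L` is `ℤ`-graded, and in an artinian graded ring every homogeneous element of
nonzero degree is nilpotent (`LPA.isNilpotent_of_homogeneous`). A path which is nonzero in `L` and
repeats an edge would contain a closed path `c` with all powers nonzero, because `c^* c` is a vertex.
Thus nonzero paths repeat no edge, and there are finitely many of them (`LPA.finite_paths`). The
same holds for ghost paths, by passing to the opposite ring. Since `L` is spanned by the monomials
`p g q^*` with `g` equal to `1` or a vertex (`LPA.span_monomials`), it is finite-dimensional.

The argument never requires knowing which vertices and edges are nonzero in `L`. In particular,
graphs with infinitely many vertices, where `1` is adjoined, are not treated separately.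
-/


noncomputable section
open scoped Classical
universe u

/-- `a` and `b` generate a free group of rank two, i.e. form a non-cyclic free subgroup. -/
def FreePair {G : Type*} [Group G] (a b : G) : Prop :=
  Function.Injective (FreeGroup.lift ![a, b] : FreeGroup (Fin 2) →* G)

/-- A field is absolute (locally finite) if every finite subset generates a finite
subfield over the prime subfield. -/
def IsAbsoluteField (K : Type*) [Field K] : Prop :=
  ∀ S : Finset K, ((Subfield.closure (S : Set K) : Subfield K) : Set K).Finite

/-- `a` is transcendental over the prime subfield of `K`. -/
def TranscendentalOverPrime (K : Type*) [Field K] (a : K) : Prop :=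
  ∀ p : Polynomial ℤ, Polynomial.aeval a p = 0 → p.map (Int.castRingHom K) = 0

/-- `a` and `b` are algebraically independent over the prime subfield of `K`. -/
def AlgIndepOverPrime (K : Type*) [Field K] (a b : K) : Prop :=
  ∀ p : MvPolynomial (Fin 2) ℤ, MvPolynomial.aeval ![a, b] p = 0 →
    MvPolynomial.map (Int.castRingHom K) p = 0

/-- A two-sided ideal is (left) primitive if it is the annihilator of a simple left module. -/
def IsPrimitiveIdeal {R : Type u} [Ring R] (P : TwoSidedIdeal R) : Prop :=
  ∃ (M : Type u) (_ : AddCommGroup M) (_ : Module R M),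
    IsSimpleModule R M ∧ ∀ x : R, x ∈ P ↔ ∀ m : M, x • m = 0

namespace LPA

/-- Generators of Cohn/Leavitt path algebras: vertices, edges and ghost edges. -/
inductive Gen (V : Type*) (E : Type*)
  | vertex : V → Gen V E
  | edge : E → Gen V E
  | ghost : E → Gen V E

section rels

variable (K : Type*) [Field K] {V E : Type*} (s r : E → V)

/-- The defining relations (V), (E1), (E2), (CK1) of the Cohn path algebra of the graph
with vertex set `V`, edge set `E`, source map `s` and range map `r`; together with the
identification of `1` with the sum of all vertices when the vertex set is finite. -/
inductive CohnRel : FreeAlgebra K (Gen V E) → FreeAlgebra K (Gen V E) → Prop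
  | vtx_mul (v w : V) :
      CohnRel (FreeAlgebra.ι K (Gen.vertex v) * FreeAlgebra.ι K (Gen.vertex w))
        (if v = w then FreeAlgebra.ι K (Gen.vertex v) else 0)
  | edge_src (e : E) :
      CohnRel (FreeAlgebra.ι K (Gen.vertex (s e)) * FreeAlgebra.ι K (Gen.edge e))
        (FreeAlgebra.ι K (Gen.edge e))
  | edge_rng (e : E) :
      CohnRel (FreeAlgebra.ι K (Gen.edge e) * FreeAlgebra.ι K (Gen.vertex (r e)))
        (FreeAlgebra.ι K (Gen.edge e))
  | ghost_rng (e : E) :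
      CohnRel (FreeAlgebra.ι K (Gen.vertex (r e)) * FreeAlgebra.ι K (Gen.ghost e))
        (FreeAlgebra.ι K (Gen.ghost e))
  | ghost_src (e : E) :
      CohnRel (FreeAlgebra.ι K (Gen.ghost e) * FreeAlgebra.ι K (Gen.vertex (s e)))
        (FreeAlgebra.ι K (Gen.ghost e))
  | ck1 (e f : E) :
      CohnRel (FreeAlgebra.ι K (Gen.ghost e) * FreeAlgebra.ι K (Gen.edge f))
        (if e = f then FreeAlgebra.ι K (Gen.vertex (r e)) else 0)
  | unit [Fintype V] :
      CohnRel (1 : FreeAlgebra K (Gen V E)) (∑ v : V, FreeAlgebra.ι K (Gen.vertex v))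

/-- The defining relations of the Leavitt path algebra: those of the Cohn path algebra
together with the (CK2) relations at every regular vertex. -/
inductive LeavittRel : FreeAlgebra K (Gen V E) → FreeAlgebra K (Gen V E) → Prop
  | cohn {a b : FreeAlgebra K (Gen V E)} : CohnRel K s r a b → LeavittRel a b
  | ck2 (v : V) (hfin : {e : E | s e = v}.Finite) (hne : {e : E | s e = v}.Nonempty) :
      LeavittRel (FreeAlgebra.ι K (Gen.vertex v))
        (∑ e ∈ hfin.toFinset, FreeAlgebra.ι K (Gen.edge e) * FreeAlgebra.ι K (Gen.ghost e))

/-- The Cohn path algebra of the graph `(V, E, s, r)` with coefficients in `K`. -/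
abbrev CohnPathAlgebra := RingQuot (CohnRel K s r)

/-- The Leavitt path algebra of the graph `(V, E, s, r)` with coefficients in `K`. -/
abbrev LeavittPathAlgebra := RingQuot (LeavittRel K s r)

/-- The image of a vertex in the Leavitt path algebra. -/
def vtx (v : V) : LeavittPathAlgebra K s r :=
  RingQuot.mkAlgHom K (LeavittRel K s r) (FreeAlgebra.ι K (Gen.vertex v))

/-- The image of an edge in the Leavitt path algebra. -/
def edg (e : E) : LeavittPathAlgebra K s r :=
  RingQuot.mkAlgHom K (LeavittRel K s r) (FreeAlgebra.ι K (Gen.edge e))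

/-- The image of a ghost edge in the Leavitt path algebra. -/
def gh (e : E) : LeavittPathAlgebra K s r :=
  RingQuot.mkAlgHom K (LeavittRel K s r) (FreeAlgebra.ι K (Gen.ghost e))

end rels

section graph

variable {V E : Type*}

/-- `u ≥ v` : there is a (finite, possibly trivial) path from `u` to `v`. -/
def Reaches (s r : E → V) (u v : V) : Prop :=
  Relation.ReflTransGen (fun a b => ∃ e : E, s e = a ∧ r e = b) u v

/-- A sink emits no edges. -/
def IsSink (s : E → V) (v : V) : Prop := ∀ e : E, s e ≠ v

/-- An infinite emitter emits infinitely many edges. -/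
def IsInfiniteEmitter (s : E → V) (v : V) : Prop := {e : E | s e = v}.Infinite

/-- A regular vertex is neither a sink nor an infinite emitter. -/
def IsRegular (s : E → V) (v : V) : Prop :=
  (∃ e : E, s e = v) ∧ {e : E | s e = v}.Finite

/-- Hereditary subsets of vertices. -/
def IsHereditary (s r : E → V) (H : Set V) : Prop :=
  ∀ u ∈ H, ∀ v : V, Reaches s r u v → v ∈ H

/-- Saturated subsets of vertices. -/
def IsSaturated (s r : E → V) (H : Set V) : Prop :=
  ∀ v : V, IsRegular s v → (∀ e : E, s e = v → r e ∈ H) → v ∈ H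

/-- A breaking vertex of a hereditary saturated set `H`. -/
def IsBreakingVertex (s r : E → V) (H : Set V) (w : V) : Prop :=
  w ∉ H ∧ IsInfiniteEmitter s w ∧
    {e : E | s e = w ∧ r e ∉ H}.Finite ∧ {e : E | s e = w ∧ r e ∉ H}.Nonempty

/-- An infinite path, as a sequence of composable edges. -/
def IsInfPath (s r : E → V) (p : ℕ → E) : Prop := ∀ i, r (p i) = s (p (i + 1))

/-- Tail equivalence of infinite paths. -/
def TailEquiv (p q : ℕ → E) : Prop := ∃ m n : ℕ, ∀ i, p (m + i) = q (n + i)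

/-- Prepending an edge to an infinite path. -/
def consPath (f : E) (p : ℕ → E) : ℕ → E := fun i =>
  match i with
  | 0 => f
  | (j + 1) => p j

/-- A cycle of length `m`, encoded as the `m`-periodic infinite path obtained by
traversing it repeatedly; the sources of its first `m` edges are pairwise distinct. -/
def IsCycle (s r : E → V) (m : ℕ) (c : ℕ → E) : Prop :=
  0 < m ∧ IsInfPath s r c ∧ (∀ i, c (i + m) = c i) ∧
    ∀ i j, i < m → j < m → s (c i) = s (c j) → i = j

/-- A cycle (as a periodic infinite path) has no exits. -/
def CycleNoExit (s : E → V) (c : ℕ → E) : Prop :=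
  ∀ i, ∀ e : E, s e = s (c i) → e = c i

/-- An exclusive cycle: every cycle based at one of its vertices is a rotation of it. -/
def IsExclusiveCycle (s r : E → V) (m : ℕ) (c : ℕ → E) : Prop :=
  IsCycle s r m c ∧ ∀ (m' : ℕ) (c' : ℕ → E), IsCycle s r m' c' →
    (∃ i, s (c' 0) = s (c i)) → ∃ k, ∀ j, c' j = c (j + k)

/-- `l` is (the list of edges of) a finite path starting at the vertex `v`
(the empty list is the trivial path at `v`). -/
def IsPathFrom (s r : E → V) (v : V) (l : List E) : Prop :=
  l.Chain' (fun e f => r e = s f) ∧ ∀ h : l ≠ [], s (l.head h) = v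

/-- The terminal vertex of a finite path starting at `v`. -/
def pathEnd (r : E → V) (v : V) (l : List E) : V :=
  if h : l ≠ [] then r (l.getLast h) else v

end graph

section elements

variable (K : Type*) [Field K] {V E : Type*} (s r : E → V)

/-- The finite set of edges emitted by a breaking vertex `w` of `H` whose range is
outside `H` (junk value `∅` if that set of edges is infinite). -/
def breakingFinset (H : Set V) (w : V) : Finset E :=
  if h : {e : E | s e = w ∧ r e ∉ H}.Finite then h.toFinset else ∅

/-- The element `w^H = w - ∑_{s(e) = w, r(e) ∉ H} e e^*` of the Leavitt path algebra. -/
def wHElem (H : Set V) (w : V) : LeavittPathAlgebra K s r :=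
  vtx K s r w - ∑ e ∈ breakingFinset s r H w, edg K s r e * gh K s r e

/-- The ideal `I(H, S)` generated by the vertices in `H` and the elements `w^H`, `w ∈ S`. -/
def idealHS (H : Set V) (S : Set V) : TwoSidedIdeal (LeavittPathAlgebra K s r) :=
  TwoSidedIdeal.span ((fun v => vtx K s r v) '' H ∪ (fun w => wHElem K s r H w) '' S)

end elements

end LPA

/-- A (left) primitive ring: a ring admitting a faithful simple left module. -/
def IsPrimitiveRing (R : Type u) [Ring R] : Prop :=
  ∃ (M : Type u) (_ : AddCommGroup M) (_ : Module R M),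
    IsSimpleModule R M ∧ ∀ x : R, (∀ m : M, x • m = 0) → x = 0

namespace LPA

section conc

variable {V E : Type*}

/-- Reachability through paths all of whose vertices beyond the first lie outside `H`,
i.e. reachability in the quotient graph `E ∖ (H, B_H)`. -/
def ReachesOutside (s r : E → V) (H : Set V) (u v : V) : Prop :=
  Relation.ReflTransGen (fun a b => ∃ e : E, s e = a ∧ r e = b ∧ r e ∉ H) u v

variable (K : Type*) [Field K] (s r : E → V)

/-- The standard conclusion: for an edge `f`, in characteristic zero the elements
`a = 1 + α f^*`, `b = 1 + α f` (with `α = 2` or transcendental over the prime field)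
generate a non-cyclic free subgroup of `L_K(E)^×`, and in characteristic `t > 0` the
elements `c = a + (β - 1) s(f) + (β⁻¹ - 1) r(f)`, `d = b + (β - 1) s(f) + (β⁻¹ - 1) r(f)`
(with `α, β` algebraically independent over the prime field) do. -/
def FreeSubgroupFromEdge (f : E) : Prop :=
  ∀ α β : K,
    (CharP K 0 → (α = 2 ∨ TranscendentalOverPrime K α) →
      ∃ ua ub : (LeavittPathAlgebra K s r)ˣ,
        (ua : LeavittPathAlgebra K s r) =
            1 + algebraMap K (LeavittPathAlgebra K s r) α * gh K s r f ∧
        (ub : LeavittPathAlgebra K s r) =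
            1 + algebraMap K (LeavittPathAlgebra K s r) α * edg K s r f ∧
        FreePair ua ub) ∧
    (∀ t : ℕ, 0 < t → CharP K t → AlgIndepOverPrime K α β →
      ∃ uc ud : (LeavittPathAlgebra K s r)ˣ,
        (uc : LeavittPathAlgebra K s r) =
            1 + algebraMap K (LeavittPathAlgebra K s r) α * gh K s r f
              + algebraMap K (LeavittPathAlgebra K s r) (β - 1) * vtx K s r (s f)
              + algebraMap K (LeavittPathAlgebra K s r) (β⁻¹ - 1) * vtx K s r (r f) ∧
        (ud : LeavittPathAlgebra K s r) =
            1 + algebraMap K (LeavittPathAlgebra K s r) α * edg K s r f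
              + algebraMap K (LeavittPathAlgebra K s r) (β - 1) * vtx K s r (s f)
              + algebraMap K (LeavittPathAlgebra K s r) (β⁻¹ - 1) * vtx K s r (r f) ∧
        FreePair uc ud)

end conc

end LPA


namespace LPA
/-! ### Artinian rings -/

section artinian

/-- Let `φ : R → R[ℤ]` be the coaction of a grading of an artinian ring `R`. A homogeneous element
`c` of nonzero degree `n` is nilpotent: since `1 - c t ^ n` cannot be a right zero divisor in `R[ℤ]`,
right multiplication by `1 - c` is injective on `R`, hence surjective. If `x (1 - c) = 1`, then
`φ x` is forced to be the geometric series `∑ c ^ k t ^ (k n)`, which is a finite sum. -/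
theorem isNilpotent_of_homogeneous {R : Type*} [Ring R] [IsArtinianRing R]
    (φ : R →+* AddMonoidAlgebra R ℤ) (hφ : Function.Injective φ) (c : R) (n : ℤ) (hn : n ≠ 0)
    (hc : φ c = AddMonoidAlgebra.single n c) : IsNilpotent c := by
  have coeff_rec : ∀ (X Y : AddMonoidAlgebra R ℤ), X * (1 - AddMonoidAlgebra.single n c) = Y →
      ∀ m, X.coeff m = Y.coeff m + X.coeff (m - n) * c := by
    rintro X Y rfl m
    rw [mul_sub, mul_one, AddMonoidAlgebra.coeff_sub, Finsupp.sub_apply,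
      AddMonoidAlgebra.coeff_mul_single_apply, ← sub_eq_add_neg, sub_add_cancel]
  have exists_zero : ∀ (X : AddMonoidAlgebra R ℤ) (m d : ℤ), d ≠ 0 →
      ∃ k : ℕ, X.coeff (m + k * d) = 0 := by
    intro X m d hd
    by_contra! h
    have hinj : Function.Injective (fun k : ℕ => m + (k : ℤ) * d) := by
      intro i j hij
      simpa [hd] using hij
    exact Set.infinite_of_injective_forall_mem hinj
      (s := (X.coeff.support : Set ℤ)) (fun k => by simpa using h k) (Finset.finite_toSet _)
  -- Following the recursion backwards along `m, m - n, m - 2 n, …` leaves the finite support.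
  have vanish : ∀ (X : AddMonoidAlgebra R ℤ) (m : ℤ),
      (∀ k : ℕ, X.coeff (m - k * n) = X.coeff (m - k * n - n) * c) → X.coeff m = 0 := by
    intro X m h
    have hk : ∀ k : ℕ, X.coeff m = X.coeff (m - k * n) * c ^ k := by
      intro k
      induction k with
      | zero => simp
      | succ k ih =>
        rw [ih, h k, mul_assoc, ← pow_succ']
        congr 2
        push_cast; ring_nf
    obtain ⟨k, hk0⟩ := exists_zero X m (-n) (by simpa using hn)
    rw [hk k, show m - (k : ℤ) * n = m + k * -n by ring, hk0, zero_mul]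
  have h1c : φ (1 - c) = 1 - AddMonoidAlgebra.single n c := by rw [map_sub, map_one, hc]
  have hinj : Function.Injective (LinearMap.toSpanSingleton R R (1 - c)) := by
    rw [injective_iff_map_eq_zero]
    intro z hz
    have hz' : φ z * (1 - AddMonoidAlgebra.single n c) = 0 := by
      have hz1 : z * (1 - c) = 0 := by simpa using hz
      rw [← h1c, ← map_mul, hz1, map_zero]
    apply hφ
    rw [map_zero]
    ext m
    simpa using vanish (φ z) m (fun k => by simpa using coeff_rec _ _ hz' (m - k * n))
  obtain ⟨x, hx⟩ := IsArtinian.surjective_of_injective_endomorphism _ hinj 1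
  have hX : φ x * (1 - AddMonoidAlgebra.single n c) = 1 := by
    have hx1 : x * (1 - c) = 1 := by simpa using hx
    rw [← h1c, ← map_mul, hx1, map_one]
  have hrec := coeff_rec _ _ hX
  have hone : ∀ m : ℤ, m ≠ 0 → (1 : AddMonoidAlgebra R ℤ).coeff m = 0 := by
    intro m hm
    rw [AddMonoidAlgebra.one_def, AddMonoidAlgebra.coeff_single, Finsupp.single_apply, if_neg hm.symm]
  have hneg : (φ x).coeff (-n) = 0 := by
    apply vanish
    intro k
    rw [hrec, hone, zero_add]
    have h2 : (-1 - (k : ℤ)) * n ≠ 0 := mul_ne_zero (by omega) hn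
    intro h
    exact h2 (by linear_combination h)
  have hpow : ∀ k : ℕ, (φ x).coeff ((k : ℤ) * n) = c ^ k := by
    intro k
    induction k with
    | zero =>
      rw [Nat.cast_zero, zero_mul, hrec, zero_sub, hneg]
      rw [AddMonoidAlgebra.one_def, AddMonoidAlgebra.coeff_single, Finsupp.single_eq_same]
      simp
    | succ k ih =>
      rw [hrec, hone, zero_add, pow_succ, ← ih]
      · congr 2
        push_cast; ring_nf
      · exact mul_ne_zero (by positivity) hn
  obtain ⟨k, hk⟩ := exists_zero (φ x) 0 n hn
  rw [zero_add] at hk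
  exact ⟨k, by rw [← hpow, hk]⟩

/-- The left ideals generated by orthogonal idempotents are independent. -/
theorem finite_ne_zero_of_orthogonal {R ι : Type*} [Ring R] [IsArtinianRing R] (u : ι → R)
    (hidem : ∀ i, u i * u i = u i) (horth : ∀ i j, i ≠ j → u i * u j = 0) :
    {i | u i ≠ 0}.Finite := by
  have hind : iSupIndep (fun i => Submodule.span R {u i}) := by
    intro i
    rw [Submodule.disjoint_def]
    intro x hx hx'
    obtain ⟨y, rfl⟩ := Submodule.mem_span_singleton.1 hx
    have hle : (⨆ j, ⨆ (_ : j ≠ i), Submodule.span R {u j}) ≤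
        LinearMap.ker (LinearMap.toSpanSingleton R R (u i)) := by
      refine iSup₂_le fun j hj => ?_
      rw [Submodule.span_singleton_le_iff_mem]
      simp [horth j i hj]
    have := hle hx'
    simpa [mul_assoc, hidem] using this
  refine (WellFoundedLT.finite_ne_bot_of_iSupIndep hind).subset ?_
  intro i hi
  simpa using hi

end artinian

/-! ### Nonzero paths -/

section paths

variable {R V E : Type*} [Ring R] (s r : E → V) (u : V → R) (a b : E → R)

/-- If `a e * a f ≠ 0`, then `f` starts where `e` ends, so that left multiplication by `b e` cancels
`a e` in front of `a f`. -/
theorem edge_mul_ne_zero (horth : ∀ v w, v ≠ w → u v * u w = 0)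
    (hba : ∀ e, b e * a e = u (r e)) (hua : ∀ e, u (s e) * a e = a e)
    (hau : ∀ e, a e * u (r e) = a e) {e f : E} {z : R}
    (hef : a e * a f ≠ 0) (hz : a f * z ≠ 0) : a e * (a f * z) ≠ 0 := by
  have hrs : r e = s f := by
    by_contra h
    apply hef
    rw [← hau e, ← hua f, mul_assoc, ← mul_assoc (u _) (u _), horth _ _ h, zero_mul, mul_zero]
  intro h0
  apply hz
  calc a f * z = u (r e) * a f * z := by rw [hrs, hua]
    _ = b e * (a e * (a f * z)) := by rw [← hba]; simp only [mul_assoc]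
    _ = 0 := by rw [h0, mul_zero]

theorem path_mul_ne_zero (horth : ∀ v w, v ≠ w → u v * u w = 0)
    (hba : ∀ e, b e * a e = u (r e)) (hua : ∀ e, u (s e) * a e = a e)
    (hau : ∀ e, a e * u (r e) = a e) {f : E} {z : R} (hz : a f * z ≠ 0) (l : List E)
    (hl : (l.map a).prod * a f ≠ 0) : (l.map a).prod * (a f * z) ≠ 0 := by
  induction l with
  | nil => simpa using hz
  | cons g l ih =>
    simp only [List.map_cons, List.prod_cons, mul_assoc] at hl ⊢
    have h1 := ih (right_ne_zero_of_mul hl)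
    cases l with
    | nil =>
      simp only [List.map_nil, List.prod_nil, one_mul] at hl ⊢
      exact edge_mul_ne_zero s r u a b horth hba hua hau hl hz
    | cons h l =>
      simp only [List.map_cons, List.prod_cons, mul_assoc] at hl h1 ⊢
      refine edge_mul_ne_zero s r u a b horth hba hua hau ?_ h1
      rw [← mul_assoc] at hl
      exact left_ne_zero_of_mul hl

/-- If every product of a nonempty word in the edges is nilpotent, then a nonzero path has no
repeated edge: from `e p e ≠ 0` it would follow that `(e p) ^ k e ≠ 0` for all `k`. Over finitely
many nonzero edges there are only finitely many such words. -/
theorem finite_paths (horth : ∀ v w, v ≠ w → u v * u w = 0)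
    (hba : ∀ e, b e * a e = u (r e)) (hua : ∀ e, u (s e) * a e = a e)
    (hau : ∀ e, a e * u (r e) = a e) (hfin : {e | a e ≠ 0}.Finite)
    (hnil : ∀ l : List E, l ≠ [] → IsNilpotent (l.map a).prod) :
    {l : List E | (l.map a).prod ≠ 0}.Finite := by
  have hnodup : ∀ l : List E, (l.map a).prod ≠ 0 → l.Nodup := by
    intro l
    induction l with
    | nil => simp
    | cons e l ih =>
      intro h
      rw [List.map_cons, List.prod_cons] at h
      refine List.nodup_cons.2 ⟨fun he => ?_, ih (right_ne_zero_of_mul h)⟩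
      obtain ⟨p, q, rfl⟩ := List.append_of_mem he
      obtain ⟨k, hk⟩ := hnil (e :: p) (by simp)
      have hp : ((e :: p).map a).prod * a e ≠ 0 := by
        intro h0
        apply h
        simp only [List.map_append, List.map_cons, List.prod_append, List.prod_cons] at h0 ⊢
        rw [← mul_assoc, ← mul_assoc, h0, zero_mul]
      have key : ∀ k : ℕ, ∃ z, ((e :: p).map a).prod ^ k * a e = a e * z ∧ a e * z ≠ 0 := by
        intro k
        induction k with
        | zero => exact ⟨1, by simp, by simpa using left_ne_zero_of_mul h⟩
        | succ k ihk =>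
          obtain ⟨z, hz, hz0⟩ := ihk
          refine ⟨(p.map a).prod * (a e * z), ?_, ?_⟩
          · rw [pow_succ', mul_assoc, hz]
            simp [mul_assoc]
          · have := path_mul_ne_zero s r u a b horth hba hua hau hz0 (e :: p) hp
            simpa [mul_assoc] using this
      obtain ⟨z, hz, hz0⟩ := key k
      exact hz0 (by rw [← hz, hk, zero_mul])
  have hmem : ∀ l : List E, (l.map a).prod ≠ 0 → ∀ e ∈ l, a e ≠ 0 := by
    intro l hl e he h0
    obtain ⟨p, q, rfl⟩ := List.append_of_mem he
    simp [h0] at hl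
  let F := hfin.toFinset
  have hF := List.finite_length_le F F.card
  refine (hF.image (List.map Subtype.val)).subset ?_
  intro l hl
  have hlF : ∀ e ∈ l, e ∈ F := fun e he => hfin.mem_toFinset.2 (hmem l hl e he)
  have hval : (l.attachWith (· ∈ F) hlF).map Subtype.val = l := by simp
  refine ⟨l.attachWith (· ∈ F) hlF, ?_, hval⟩
  have hnd : (l.attachWith (· ∈ F) hlF).Nodup := by
    rw [← List.nodup_map_iff Subtype.val_injective, hval]
    exact hnodup l hl
  simpa using hnd.length_le_card

end paths

/-! ### Finite-dimensional algebras over absolute fields -/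

section field

/-- The coordinates of the generators and of their inverses, those of `1`, and the structure
constants generate a finite field `F`; the elements with coordinates in `F` form a finite monoid
containing the whole subgroup. -/
theorem finite_closure_of_finiteDimensional {K R : Type*} [Field K] [Ring R] [Algebra K R]
    [FiniteDimensional K R]
    (hK : ∀ S : Finset K, ((Subfield.closure (S : Set K) : Subfield K) : Set K).Finite)
    (S : Finset Rˣ) : ((Subgroup.closure (S : Set Rˣ) : Subgroup Rˣ) : Set Rˣ).Finite := by
  let B := Module.finBasis K R
  let X : Finset R := Finset.univ.image (fun p : Fin _ × Fin _ => B p.1 * B p.2) ∪ {1} ∪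
    S.image (fun g : Rˣ => (g : R)) ∪ S.image (fun g : Rˣ => ((g⁻¹ : Rˣ) : R))
  let C : Finset K := (X ×ˢ Finset.univ).image (fun p => B.repr p.1 p.2)
  let F := Subfield.closure (C : Set K)
  have hXF : ∀ x ∈ X, ∀ i, B.repr x i ∈ F := by
    intro x hx i
    apply Subfield.subset_closure
    simp only [C, Finset.coe_image, Set.mem_image, Finset.mem_coe, Finset.mem_product,
      Finset.mem_univ, and_true, Prod.exists]
    exact ⟨x, i, hx, rfl⟩
  let T : Submonoid R :=
    { carrier := {x | ∀ i, B.repr x i ∈ F}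
      one_mem' := hXF 1 (by simp [X])
      mul_mem' := by
        intro x y hx hy k
        have : x * y = ∑ i, ∑ j, (B.repr x i * B.repr y j) • (B i * B j) := by
          conv_lhs => rw [← B.sum_repr x, ← B.sum_repr y, Finset.sum_mul_sum]
          simp only [smul_mul_smul_comm]
        rw [this]
        simp only [map_sum, map_smul, Finsupp.coe_finsetSum, Finset.sum_apply,
          Finsupp.smul_apply, smul_eq_mul]
        refine sum_mem fun i _ => sum_mem fun j _ => mul_mem (mul_mem (hx i) (hy j)) (hXF _ ?_ k)
        simp only [X, Finset.mem_union, Finset.mem_image]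
        exact Or.inl (Or.inl (Or.inl ⟨(i, j), by simp, rfl⟩)) }
  have hT : (T : Set R).Finite := by
    have hF : Finite F := hK C
    refine Set.Finite.of_finite_image (f := fun x => (fun i => B.repr x i)) ?_ ?_
    · refine (Set.Finite.pi' (fun _ : Fin _ => (hK C))).subset ?_
      rintro _ ⟨x, hx, rfl⟩ i
      exact hx i
    · intro x _ y _ hxy
      apply B.repr.injective
      ext i
      exact congrFun hxy i
  refine (hT.preimage (Units.val_injective.injOn (s := (Units.val ⁻¹' (T : Set R))))).subset ?_
  suffices H : ∀ g ∈ Subgroup.closure (S : Set Rˣ), (g : R) ∈ T ∧ ((g⁻¹ : Rˣ) : R) ∈ T from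
    fun g hg => (H g hg).1
  intro g hg
  induction hg using Subgroup.closure_induction with
  | mem g hg =>
    refine ⟨hXF _ ?_, hXF _ ?_⟩
    · simp only [X, Finset.mem_union, Finset.mem_image]
      exact Or.inl (Or.inr ⟨g, hg, rfl⟩)
    · simp only [X, Finset.mem_union, Finset.mem_image]
      exact Or.inr ⟨g, hg, rfl⟩
  | one => simp [T.one_mem]
  | mul x y _ _ hx hy =>
    rw [mul_inv_rev, Units.val_mul, Units.val_mul]
    exact ⟨T.mul_mem hx.1 hy.1, T.mul_mem hy.2 hx.2⟩
  | inv x _ hx => exact ⟨hx.2, by simpa using hx.1⟩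

end field
end LPA

namespace LPA
/-! ### Spanning by monomials -/

section span

variable {K R V E : Type*} [Field K] [Ring R] [Algebra K R] (u : V → R) (a b : E → R)

/-- The products `p * g * q` with `p` a product of edges `a e`, `q` a product of ghost edges `b e`
and `g` either `1` or a vertex `u v`. The words `p` and `q` need not be paths (the product is then
zero), and the option `g = 1` is needed because the algebra is generated as a unital algebra. -/
def Monomials : Set R :=
  {x | ∃ (l l' : List E) (g : R), (g = 1 ∨ ∃ v, g = u v) ∧
    x = (l.map a).prod * (g * (l'.map b).prod)}

/-- Only finitely many triples of factors have all three factors nonzero; all others contribute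
just `0`. -/
theorem finite_monomials (hu : {v | u v ≠ 0}.Finite)
    (ha : {l : List E | (l.map a).prod ≠ 0}.Finite)
    (hb : {l : List E | (l.map b).prod ≠ 0}.Finite) : (Monomials u a b).Finite := by
  have hG : (insert 1 (u '' {v | u v ≠ 0})).Finite := (hu.image u).insert 1
  refine ((Set.Finite.image (fun p : List E × R × List E =>
    (p.1.map a).prod * (p.2.1 * (p.2.2.map b).prod)) (ha.prod (hG.prod hb))).insert 0).subset ?_
  rintro x ⟨l, l', g, hg, rfl⟩
  by_cases h0 : (l.map a).prod * (g * (l'.map b).prod) = 0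
  · exact Or.inl h0
  · refine Or.inr ⟨(l, g, l'), ⟨left_ne_zero_of_mul h0, ?_, ?_⟩, rfl⟩
    · rcases hg with rfl | ⟨v, rfl⟩
      · exact Or.inl rfl
      · exact Or.inr ⟨v, left_ne_zero_of_mul (right_ne_zero_of_mul h0), rfl⟩
    · exact right_ne_zero_of_mul (right_ne_zero_of_mul h0)

variable (s r : E → V)

theorem vertex_mul_mem (huu : ∀ v w, u v * u w = if v = w then u v else 0)
    (hua : ∀ e, u (s e) * a e = a e) (v : V) {x : R}
    (hx : x ∈ Submodule.span K (Monomials u a b)) :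
    u v * x ∈ Submodule.span K (Monomials u a b) := by
  induction hx using Submodule.span_induction with
  | zero => simp
  | add x y _ _ hx hy => rw [mul_add]; exact add_mem hx hy
  | smul c x _ hx => rw [mul_smul_comm]; exact Submodule.smul_mem _ _ hx
  | mem x hx =>
    obtain ⟨l, l', g, hg, rfl⟩ := hx
    cases l with
    | nil =>
      rcases hg with rfl | ⟨w, rfl⟩
      · exact Submodule.subset_span ⟨[], l', u v, Or.inr ⟨v, rfl⟩, by simp⟩
      · by_cases h : v = w
        · refine Submodule.subset_span ⟨[], l', u v, Or.inr ⟨v, rfl⟩, ?_⟩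
          simp [← mul_assoc, huu, h]
        · simp [← mul_assoc, huu, h]
    | cons e l =>
      by_cases h : v = s e
      · refine Submodule.subset_span ⟨e :: l, l', g, hg, ?_⟩
        subst h
        simp [← mul_assoc, hua]
      · have : u v * a e = 0 := by rw [← hua e, ← mul_assoc, huu, if_neg h, zero_mul]
        simp [← mul_assoc, this]

theorem edge_mul_mem (e : E) {x : R}
    (hx : x ∈ Submodule.span K (Monomials u a b)) :
    a e * x ∈ Submodule.span K (Monomials u a b) := by
  induction hx using Submodule.span_induction with
  | zero => simp
  | add x y _ _ hx hy => rw [mul_add]; exact add_mem hx hy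
  | smul c x _ hx => rw [mul_smul_comm]; exact Submodule.smul_mem _ _ hx
  | mem x hx =>
    obtain ⟨l, l', g, hg, rfl⟩ := hx
    exact Submodule.subset_span ⟨e :: l, l', g, hg, by simp [mul_assoc]⟩

theorem ghost_mul_mem (huu : ∀ v w, u v * u w = if v = w then u v else 0)
    (hua : ∀ e, u (s e) * a e = a e) (hbu : ∀ e, b e * u (s e) = b e)
    (hba : ∀ e f, b e * a f = if e = f then u (r e) else 0) (e : E) {x : R}
    (hx : x ∈ Submodule.span K (Monomials u a b)) :
    b e * x ∈ Submodule.span K (Monomials u a b) := by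
  induction hx using Submodule.span_induction with
  | zero => simp
  | add x y _ _ hx hy => rw [mul_add]; exact add_mem hx hy
  | smul c x _ hx => rw [mul_smul_comm]; exact Submodule.smul_mem _ _ hx
  | mem x hx =>
    obtain ⟨l, l', g, hg, rfl⟩ := hx
    cases l with
    | nil =>
      rcases hg with rfl | ⟨w, rfl⟩
      · exact Submodule.subset_span ⟨[], e :: l', 1, Or.inl rfl, by simp⟩
      · by_cases h : s e = w
        · refine Submodule.subset_span ⟨[], e :: l', 1, Or.inl rfl, ?_⟩
          simp [← mul_assoc, ← h, hbu]
        · have : b e * u w = 0 := by rw [← hbu e, mul_assoc, huu, if_neg h, mul_zero]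
          simp [← mul_assoc, this]
    | cons f l =>
      by_cases h : e = f
      · have hm : (l.map a).prod * (g * (l'.map b).prod) ∈ Submodule.span K (Monomials u a b) :=
          Submodule.subset_span ⟨l, l', g, hg, rfl⟩
        have := vertex_mul_mem u a b s huu hua (r e) hm
        simpa [← mul_assoc, hba, h] using this
      · simp [← mul_assoc, hba, h]

end span

/-! ### The Leavitt path algebra and its grading -/

section leavitt

variable (K : Type*) [Field K] {V E : Type*} (s r : E → V)

theorem vtx_mul_vtx (v w : V) :
    vtx K s r v * vtx K s r w = if v = w then vtx K s r v else 0 := by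
  have := RingQuot.mkAlgHom_rel K (LeavittRel.cohn (CohnRel.vtx_mul (K := K) (s := s) (r := r) v w))
  rw [map_mul] at this
  simp only [vtx, this]
  split_ifs <;> simp

theorem vtx_mul_edg (e : E) : vtx K s r (s e) * edg K s r e = edg K s r e := by
  have := RingQuot.mkAlgHom_rel K (LeavittRel.cohn (CohnRel.edge_src (K := K) (s := s) (r := r) e))
  rwa [map_mul] at this

theorem edg_mul_vtx (e : E) : edg K s r e * vtx K s r (r e) = edg K s r e := by
  have := RingQuot.mkAlgHom_rel K (LeavittRel.cohn (CohnRel.edge_rng (K := K) (s := s) (r := r) e))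
  rwa [map_mul] at this

theorem vtx_mul_gh (e : E) : vtx K s r (r e) * gh K s r e = gh K s r e := by
  have := RingQuot.mkAlgHom_rel K (LeavittRel.cohn (CohnRel.ghost_rng (K := K) (s := s) (r := r) e))
  rwa [map_mul] at this

theorem gh_mul_vtx (e : E) : gh K s r e * vtx K s r (s e) = gh K s r e := by
  have := RingQuot.mkAlgHom_rel K (LeavittRel.cohn (CohnRel.ghost_src (K := K) (s := s) (r := r) e))
  rwa [map_mul] at this

theorem gh_mul_edg (e f : E) :
    gh K s r e * edg K s r f = if e = f then vtx K s r (r e) else 0 := by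
  have := RingQuot.mkAlgHom_rel K (LeavittRel.cohn (CohnRel.ck1 (K := K) (s := s) (r := r) e f))
  rw [map_mul] at this
  simp only [vtx, edg, gh, this]
  split_ifs <;> simp

theorem one_eq_sum [Fintype V] : (1 : LeavittPathAlgebra K s r) = ∑ v, vtx K s r v := by
  have := RingQuot.mkAlgHom_rel K (LeavittRel.cohn (CohnRel.unit (K := K) (s := s) (r := r)))
  rwa [map_one, map_sum] at this

theorem vtx_eq_sum (v : V) (hfin : {e : E | s e = v}.Finite) (hne : {e : E | s e = v}.Nonempty) :
    vtx K s r v = ∑ e ∈ hfin.toFinset, edg K s r e * gh K s r e := by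
  have := RingQuot.mkAlgHom_rel K (LeavittRel.ck2 (K := K) (s := s) (r := r) v hfin hne)
  rw [map_sum] at this
  simp only [map_mul] at this
  exact this

/-- The images of the generators under the coaction `grad`: a vertex has degree `0`, an edge
degree `1` and a ghost edge degree `-1`. -/
def gradGen : Gen V E → AddMonoidAlgebra (LeavittPathAlgebra K s r) ℤ
  | .vertex v => AddMonoidAlgebra.single 0 (vtx K s r v)
  | .edge e => AddMonoidAlgebra.single 1 (edg K s r e)
  | .ghost e => AddMonoidAlgebra.single (-1) (gh K s r e)

theorem gradGen_rel {x y : FreeAlgebra K (Gen V E)} (h : LeavittRel K s r x y) :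
    FreeAlgebra.lift K (gradGen K s r) x = FreeAlgebra.lift K (gradGen K s r) y := by
  cases h with
  | cohn h =>
    cases h with
    | vtx_mul v w =>
      rw [map_mul, apply_ite (FreeAlgebra.lift K (gradGen K s r)), map_zero]
      simp only [FreeAlgebra.lift_ι_apply, gradGen, AddMonoidAlgebra.single_mul_single,
        vtx_mul_vtx, add_zero]
      split_ifs <;> simp
    | edge_src e =>
      simp only [map_mul, FreeAlgebra.lift_ι_apply, gradGen, AddMonoidAlgebra.single_mul_single,
        vtx_mul_edg, zero_add]
    | edge_rng e =>
      simp only [map_mul, FreeAlgebra.lift_ι_apply, gradGen, AddMonoidAlgebra.single_mul_single,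
        edg_mul_vtx, add_zero]
    | ghost_rng e =>
      simp only [map_mul, FreeAlgebra.lift_ι_apply, gradGen, AddMonoidAlgebra.single_mul_single,
        vtx_mul_gh, zero_add]
    | ghost_src e =>
      simp only [map_mul, FreeAlgebra.lift_ι_apply, gradGen, AddMonoidAlgebra.single_mul_single,
        gh_mul_vtx, add_zero]
    | ck1 e f =>
      rw [map_mul, apply_ite (FreeAlgebra.lift K (gradGen K s r)), map_zero]
      simp only [FreeAlgebra.lift_ι_apply, gradGen, AddMonoidAlgebra.single_mul_single,
        gh_mul_edg, neg_add_cancel]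
      split_ifs <;> simp
    | unit =>
      rw [map_one, map_sum, AddMonoidAlgebra.one_def, one_eq_sum]
      simp only [FreeAlgebra.lift_ι_apply, gradGen]
      exact map_sum (AddMonoidAlgebra.singleAddHom 0) _ _
  | ck2 v hfin hne =>
    rw [map_sum]
    simp only [map_mul, FreeAlgebra.lift_ι_apply, gradGen, AddMonoidAlgebra.single_mul_single,
      add_neg_cancel]
    rw [vtx_eq_sum K s r v hfin hne]
    exact map_sum (AddMonoidAlgebra.singleAddHom 0) _ _

/-- The `ℤ`-grading of the Leavitt path algebra `L`, encoded as the coaction `L → L[ℤ]`: an element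
`x` is homogeneous of degree `n` when its image is `single n x`. -/
def grad : LeavittPathAlgebra K s r →ₐ[K] AddMonoidAlgebra (LeavittPathAlgebra K s r) ℤ :=
  RingQuot.liftAlgHom K ⟨FreeAlgebra.lift K (gradGen K s r), fun _ _ h => gradGen_rel K s r h⟩

theorem grad_edg (e : E) : grad K s r (edg K s r e) = AddMonoidAlgebra.single 1 (edg K s r e) := by
  rw [grad, edg, RingQuot.liftAlgHom_mkAlgHom_apply, FreeAlgebra.lift_ι_apply, gradGen, edg]

theorem grad_gh (e : E) : grad K s r (gh K s r e) = AddMonoidAlgebra.single (-1) (gh K s r e) := by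
  rw [grad, gh, RingQuot.liftAlgHom_mkAlgHom_apply, FreeAlgebra.lift_ι_apply, gradGen, gh]

/-- The coaction is split by the map `L[ℤ] → L` summing the coefficients. -/
theorem grad_injective : Function.Injective (grad K s r) := by
  let ε : AddMonoidAlgebra (LeavittPathAlgebra K s r) ℤ →ₐ[K] LeavittPathAlgebra K s r :=
    AddMonoidAlgebra.liftNCAlgHom (AlgHom.id K _) 1 (fun _ _ => Commute.one_right _)
  have hε : ∀ n x, ε (AddMonoidAlgebra.single n x) = x := by
    intro n x
    simp only [ε, AddMonoidAlgebra.coe_liftNCAlgHom, AddMonoidAlgebra.liftNC_single]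
    simp
  have h : ε.comp (grad K s r) = AlgHom.id K _ := by
    apply RingQuot.ringQuot_ext'
    apply FreeAlgebra.hom_ext
    funext g
    simp only [Function.comp_apply, AlgHom.comp_apply, grad, RingQuot.liftAlgHom_mkAlgHom_apply,
      FreeAlgebra.lift_ι_apply, AlgHom.id_apply]
    cases g <;> simp only [gradGen, hε] <;> rfl
  exact Function.LeftInverse.injective (g := ε) (fun x => AlgHom.congr_fun h x)

theorem grad_edg_prod (l : List E) : grad K s r (l.map (edg K s r)).prod =
    AddMonoidAlgebra.single (l.length : ℤ) (l.map (edg K s r)).prod := by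
  induction l with
  | nil => rw [List.map_nil, List.prod_nil, map_one]; rfl
  | cons e l ih =>
    rw [List.map_cons, List.prod_cons, map_mul, ih, grad_edg, AddMonoidAlgebra.single_mul_single,
      List.length_cons, Nat.cast_succ, add_comm]

theorem grad_gh_prod (l : List E) : grad K s r (l.map (gh K s r)).prod =
    AddMonoidAlgebra.single (-(l.length : ℤ)) (l.map (gh K s r)).prod := by
  induction l with
  | nil => rw [List.map_nil, List.prod_nil, map_one]; rfl
  | cons e l ih =>
    rw [List.map_cons, List.prod_cons, map_mul, ih, grad_gh, AddMonoidAlgebra.single_mul_single,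
      List.length_cons, Nat.cast_succ, neg_add, add_comm]

/-- The span of the monomials contains `1` and is stable under left multiplication by generators. -/
theorem span_monomials :
    Submodule.span K (Monomials (vtx K s r) (edg K s r) (gh K s r)) = ⊤ := by
  rw [eq_top_iff]
  rintro x -
  obtain ⟨y, rfl⟩ := RingQuot.mkAlgHom_surjective K (LeavittRel K s r) x
  suffices H : ∀ m ∈ Submodule.span K (Monomials (vtx K s r) (edg K s r) (gh K s r)),
      RingQuot.mkAlgHom K (LeavittRel K s r) y * m ∈
        Submodule.span K (Monomials (vtx K s r) (edg K s r) (gh K s r)) by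
    have := H 1 (Submodule.subset_span ⟨[], [], 1, Or.inl rfl, by simp⟩)
    rwa [mul_one] at this
  induction y using FreeAlgebra.induction with
  | grade0 c =>
    intro m hm
    rw [AlgHom.commutes, ← Algebra.smul_def]
    exact Submodule.smul_mem _ _ hm
  | grade1 g =>
    intro m hm
    cases g with
    | vertex v => exact vertex_mul_mem _ _ _ s (vtx_mul_vtx K s r) (vtx_mul_edg K s r) v hm
    | edge e => exact edge_mul_mem _ _ _ e hm
    | ghost e =>
      exact ghost_mul_mem _ _ _ s r (vtx_mul_vtx K s r) (vtx_mul_edg K s r) (gh_mul_vtx K s r)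
        (gh_mul_edg K s r) e hm
  | mul x y hx hy =>
    intro m hm
    rw [map_mul, mul_assoc]
    exact hx _ (hy _ hm)
  | add x y hx hy =>
    intro m hm
    rw [map_add, add_mul]
    exact add_mem (hx _ hm) (hy _ hm)

theorem finiteDimensional_of_isArtinianRing (hart : IsArtinianRing (LeavittPathAlgebra K s r)) :
    FiniteDimensional K (LeavittPathAlgebra K s r) := by
  have horth : ∀ v w, v ≠ w → vtx K s r v * vtx K s r w = 0 := fun v w h => by
    rw [vtx_mul_vtx, if_neg h]
  have hba : ∀ e, gh K s r e * edg K s r e = vtx K s r (r e) := fun e => by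
    rw [gh_mul_edg, if_pos rfl]
  have hvtx : {v | vtx K s r v ≠ 0}.Finite :=
    finite_ne_zero_of_orthogonal _ (fun v => by rw [vtx_mul_vtx, if_pos rfl]) horth
  have hproj : {e | edg K s r e * gh K s r e ≠ 0}.Finite := by
    apply finite_ne_zero_of_orthogonal
    · intro e
      rw [mul_assoc, ← mul_assoc (gh K s r e), hba, vtx_mul_gh]
    · intro e f hef
      rw [mul_assoc, ← mul_assoc (gh K s r e), gh_mul_edg, if_neg hef, zero_mul, mul_zero]
  have hedg : {e | edg K s r e ≠ 0}.Finite := by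
    refine hproj.subset fun e he h0 => he ?_
    rw [← edg_mul_vtx, ← hba, ← mul_assoc, h0, zero_mul]
  have hgh : {e | gh K s r e ≠ 0}.Finite := by
    refine hproj.subset fun e he h0 => he ?_
    rw [← vtx_mul_gh, ← hba, mul_assoc, h0, mul_zero]
  have hpaths : {l : List E | (l.map (edg K s r)).prod ≠ 0}.Finite := by
    refine finite_paths s r (vtx K s r) (edg K s r) (gh K s r) horth hba (vtx_mul_edg K s r)
      (edg_mul_vtx K s r) hedg fun l hl => ?_
    exact isNilpotent_of_homogeneous (grad K s r).toRingHom (grad_injective K s r) _ (l.length : ℤ)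
      (by simpa using hl) (grad_edg_prod K s r l)
  have hop : ∀ l : List E, (l.map fun e => MulOpposite.op (gh K s r e)).prod =
      MulOpposite.op (l.reverse.map (gh K s r)).prod := by
    intro l
    rw [MulOpposite.op_list_prod, List.map_map, ← List.map_reverse, List.reverse_reverse]
    rfl
  -- The ghost edges, taken in the opposite ring, satisfy the relations of the edges.
  have hghosts' : {l : List E | (l.map fun e => MulOpposite.op (gh K s r e)).prod ≠ 0}.Finite := by
    refine finite_paths s r (fun v => MulOpposite.op (vtx K s r v))
      (fun e => MulOpposite.op (gh K s r e)) (fun e => MulOpposite.op (edg K s r e))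
      ?_ ?_ ?_ ?_ ?_ ?_
    · intro v w h
      rw [← MulOpposite.op_mul, horth _ _ h.symm, MulOpposite.op_zero]
    · intro e
      rw [← MulOpposite.op_mul, hba]
    · intro e
      rw [← MulOpposite.op_mul, gh_mul_vtx]
    · intro e
      rw [← MulOpposite.op_mul, vtx_mul_gh]
    · simpa only [ne_eq, MulOpposite.op_eq_zero_iff] using hgh
    · intro l hl
      obtain ⟨k, hk⟩ := isNilpotent_of_homogeneous (grad K s r).toRingHom (grad_injective K s r) _
        (-(l.reverse.length : ℤ)) (by simpa using hl) (grad_gh_prod K s r l.reverse)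
      exact ⟨k, by rw [hop, ← MulOpposite.op_pow, hk, MulOpposite.op_zero]⟩
  have hghosts : {l : List E | (l.map (gh K s r)).prod ≠ 0}.Finite := by
    refine (hghosts'.image List.reverse).subset fun l hl => ⟨l.reverse, ?_, by simp⟩
    rw [Set.mem_ofPred_eq, hop, List.reverse_reverse]
    simpa using hl
  exact ⟨Submodule.fg_def.2 ⟨_, finite_monomials _ _ _ hvtx hpaths hghosts, span_monomials K s r⟩⟩

end leavitt
end LPA

/-- over an absolute field, the unit group of a left artinian Leavitt path
algebra is locally finite. -/
theorem stmt18 (K V E : Type*) [Field K] (s r : E → V)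
    (hK : IsAbsoluteField K)
    (hart : IsArtinianRing (LPA.LeavittPathAlgebra K s r)) :
    ∀ S : Finset (LPA.LeavittPathAlgebra K s r)ˣ,
      ((Subgroup.closure (S : Set (LPA.LeavittPathAlgebra K s r)ˣ) :
          Subgroup (LPA.LeavittPathAlgebra K s r)ˣ) : Set (LPA.LeavittPathAlgebra K s r)ˣ).Finite := by
  intro S
  have := LPA.finiteDimensional_of_isArtinianRing K s r hart
  exact LPA.finite_closure_of_finiteDimensional hK S
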